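/- For all integers i, j, k, L, M, the following identity holds in the field of rational functions ℚ(q): \sum q^{T_s + T_δ + T_ε + T_{φ-1}} \{ q^{φ} [L-s+α; α] [L-s+β; β] [M-s+γ; γ] [L-s; δ] [M-s; ε] [M-s; φ] + [L-s+α-1; α-1] [L-s+β; β] [M-s+γ; γ] [L-s; δ] [M-s; ε] [M-s; φ-1] \} = \sum_{τ ≥ 0} q^{τ(M+2) - T_τ + T_{i-τ} + T_{j-τ} + T_{k-τ}} [L-τ; τ] [L-2τ; i-τ] [L-i-τ; j-τ] [M-i-j; k-τ], where the left sum is over all non-negative integers α, β, γ, δ, ε, φ with i = α + δ + ε, j = β + δ + φ, k = γ + ε + φ, s = α + β + γ + δ + ε + φ, and [m; r] denotes the extended q-binomial coefficient. -/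

import Mathlib

open Finset

/-- `(q)_n = (q;q)_n = ∏_{t=0}^{n-1} (1 - q^{t+1})` in `ℚ(q)`. -/
noncomputable def qPoch (n : ℕ) : RatFunc ℚ :=
  ∏ t ∈ Finset.range n, (1 - (RatFunc.X : RatFunc ℚ) ^ (t + 1))

/-- The extended q-binomial coefficient `[m; r] = (q^{m-r+1}; q)_r / (q;q)_r` for `r ≥ 0`
(where `m` may be any integer, so negative powers of `q` are allowed), and `0` for `r < 0`. -/
noncomputable def qbinE (m r : ℤ) : RatFunc ℚ :=
  if 0 ≤ r then
    (∏ t ∈ Finset.range r.toNat, (1 - (RatFunc.X : RatFunc ℚ) ^ (m - r + 1 + (t : ℤ)))) /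
      qPoch r.toNat
  else 0

/-- `T n = n(n+1)/2` on `ℤ` (the division is exact; in particular `T_{-1} = 0`). -/
def triZ (n : ℤ) : ℤ := n * (n + 1) / 2

/-! The summand of the sixfold sum depends on `L` and `M` only through the factors
`h_r = [N+r; r]` and `e_r = q^{T_r} [N; r]` with `N = L - s` or `N = M - s`, and both of these
satisfy a Pascal rule with coefficient `q^N`. Hence the sixfold sum satisfies, term by term, a
recurrence in `L` and one in `M` whose inhomogeneous terms have a smaller `i + j + k`. The `τ`-sum
satisfies the same two recurrences when `i + j > 0`, by creative telescoping, so by induction on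
`i + j + k` the difference of the two sides is constant in `L` and in `M`. It vanishes at
`L = i + j - 1`, `M = i + j`: there every term of the `τ`-sum contains the factor `1 - q^0`, and the
sixfold sum vanishes term by term once its second product is moved from `(δ, ε, φ)` to
`(δ + 1, ε, φ - 1)`. For `i = j = 0` both sides reduce to `q^{T_k} [M; k]`. -/

local notation "𝐪" => (RatFunc.X : RatFunc ℚ)

open Function (HasFiniteSupport)

section qPochhammer

variable {R : Type*} [CommRing R]

/-- The finite `q`-Pochhammer symbol `(A; q)_n`, for `A` and `q` in any commutative ring. -/
def qPochhammer (A q : R) (n : ℕ) : R :=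
  ∏ t ∈ range n, (1 - A * q ^ t)

lemma qPochhammer_zero (A q : R) : qPochhammer A q 0 = 1 :=
  prod_range_zero _

lemma qPochhammer_succ (A q : R) (n : ℕ) :
    qPochhammer A q (n + 1) = qPochhammer A q n * (1 - A * q ^ n) :=
  prod_range_succ _ _

lemma qPochhammer_succ' (A q : R) (n : ℕ) :
    qPochhammer A q (n + 1) = (1 - A) * qPochhammer (A * q) q n := by
  simp only [qPochhammer, prod_range_succ', pow_succ', mul_assoc, pow_zero, mul_one, mul_comm]

lemma qPochhammer_add (A q : R) (m n : ℕ) :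
    qPochhammer A q (m + n) = qPochhammer A q m * qPochhammer (A * q ^ m) q n := by
  simp only [qPochhammer, prod_range_add, pow_add, mul_assoc]

end qPochhammer

section qBinomial

lemma X_zpow_add (m n : ℤ) : 𝐪 ^ (m + n) = 𝐪 ^ m * 𝐪 ^ n :=
  zpow_add₀ RatFunc.X_ne_zero m n

lemma X_zpow_sub (m n : ℤ) : 𝐪 ^ (m - n) = 𝐪 ^ m / 𝐪 ^ n :=
  zpow_sub₀ RatFunc.X_ne_zero m n

lemma one_sub_X_pow_ne_zero {n : ℕ} (hn : n ≠ 0) : 1 - 𝐪 ^ n ≠ 0 := by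
  rw [sub_ne_zero, ← RatFunc.algebraMap_X, ← map_pow, ← map_one (algebraMap (Polynomial ℚ) _)]
  refine (RatFunc.algebraMap_injective ℚ).ne fun h => hn ?_
  simpa using (congrArg Polynomial.natDegree h).symm

lemma qPoch_succ (n : ℕ) : qPoch (n + 1) = qPoch n * (1 - 𝐪 ^ (n + 1)) :=
  prod_range_succ _ _

/-- The reciprocal `1 / (q)_n`, extended by `0` to negative `n`: this is the convention under which
`(1 - q ^ n) / (q)_n = 1 / (q)_{n-1}` for every integer `n`. -/
noncomputable def qPochInv (n : ℤ) : RatFunc ℚ :=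
  if 0 ≤ n then (qPoch n.toNat)⁻¹ else 0

lemma qPochInv_zero : qPochInv 0 = 1 := by
  simp [qPochInv, qPoch]

lemma qPochInv_of_neg {n : ℤ} (hn : n < 0) : qPochInv n = 0 :=
  if_neg hn.not_ge

lemma qPochInv_sub_one (n : ℤ) : qPochInv (n - 1) = (1 - 𝐪 ^ n) * qPochInv n := by
  rcases lt_trichotomy n 0 with hn | rfl | hn
  · rw [qPochInv_of_neg hn, qPochInv_of_neg (by omega), mul_zero]
  · rw [qPochInv_of_neg (by omega), zpow_zero, sub_self, zero_mul]
  · obtain ⟨m, rfl⟩ : ∃ m : ℕ, n = m + 1 := ⟨(n - 1).toNat, by omega⟩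
    have hm : 1 - 𝐪 ^ (m + 1) ≠ 0 := one_sub_X_pow_ne_zero m.succ_ne_zero
    rw [add_sub_cancel_right, qPochInv, qPochInv, if_pos (by omega), if_pos hn.le,
      Int.toNat_natCast, Int.toNat_natCast_add_one, qPoch_succ, mul_inv, mul_left_comm]
    norm_cast
    rw [mul_inv_cancel₀ hm, mul_one]

lemma qbinE_eq_qPochhammer_mul (m r : ℤ) :
    qbinE m r = qPochhammer (𝐪 ^ (m - r + 1)) 𝐪 r.toNat * qPochInv r := by
  simp only [qbinE, qPochhammer, qPochInv, X_zpow_add _ (Nat.cast _), zpow_natCast, div_eq_mul_inv,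
    mul_ite, mul_zero]

lemma qbinE_of_neg (m : ℤ) {r : ℤ} (hr : r < 0) : qbinE m r = 0 :=
  if_neg hr.not_ge

lemma qbinE_zero (m : ℤ) : qbinE m 0 = 1 := by
  simp [qbinE, qPoch]

lemma qbinE_eq_zero_of_lt {m r : ℤ} (hm : 0 ≤ m) (hmr : m < r) : qbinE m r = 0 := by
  have hfactor : 1 - 𝐪 ^ (m - r + 1 + ((r - m - 1).toNat : ℤ)) = 0 := by
    rw [show m - r + 1 + ((r - m - 1).toNat : ℤ) = 0 by omega, zpow_zero, sub_self]
  rw [qbinE, if_pos (by omega), prod_eq_zero (mem_range.mpr (by omega)) hfactor, zero_div]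

lemma qbinE_pascal (m r : ℤ) :
    qbinE m r = qbinE (m - 1) r + 𝐪 ^ (m - r) * qbinE (m - 1) (r - 1) := by
  rcases lt_trichotomy r 0 with hr | rfl | hr
  · simp [qbinE_of_neg _ hr, qbinE_of_neg _ (show r - 1 < 0 by omega)]
  · simp [qbinE_zero, qbinE_of_neg]
  · obtain ⟨n, rfl⟩ : ∃ n : ℕ, r = n + 1 := ⟨(r - 1).toNat, by omega⟩
    have hlast : 𝐪 ^ (m - (n + 1) + 1) * 𝐪 ^ n = 𝐪 ^ (m - (n + 1)) * 𝐪 ^ ((n : ℤ) + 1) := by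
      rw [← zpow_natCast, ← X_zpow_add, ← X_zpow_add]
      congr 1
      ring
    have hfirst : 𝐪 ^ (m - 1 - (n + 1) + 1) * 𝐪 = 𝐪 ^ (m - (n + 1) + 1) := by
      rw [← zpow_add_one₀ RatFunc.X_ne_zero]
      congr 1
      ring
    simp only [qbinE_eq_qPochhammer_mul, qPochInv_sub_one, Int.toNat_natCast_add_one]
    rw [qPochhammer_succ, qPochhammer_succ', hlast, hfirst, add_sub_cancel_right,
      Int.toNat_natCast, show m - 1 - (n : ℤ) + 1 = m - (n + 1) + 1 by ring,
      show m - 1 - ((n : ℤ) + 1) + 1 = m - (n + 1) by ring]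
    ring

lemma triZ_sub_one (n : ℤ) : triZ (n - 1) = triZ n - n := by
  rw [triZ, triZ, show n * (n + 1) = (n - 1) * (n - 1 + 1) + n * 2 by ring,
    Int.add_mul_ediv_right _ _ two_ne_zero, add_sub_cancel_right]

lemma X_zpow_triZ (n : ℤ) : 𝐪 ^ triZ n = 𝐪 ^ n * 𝐪 ^ triZ (n - 1) := by
  rw [triZ_sub_one, ← X_zpow_add, add_sub_cancel]

/-- For `N ≥ 0` this is the elementary symmetric polynomial `e_r(q, q², …, q^N)`; absorbing the
triangular power makes the exponent in Pascal's rule independent of `r`. -/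
noncomputable def qEsymm (N r : ℤ) : RatFunc ℚ :=
  𝐪 ^ triZ r * qbinE N r

/-- For `N ≥ 0` this is the complete homogeneous symmetric polynomial `h_r(1, q, …, q^N)`. -/
noncomputable def qHsymm (N r : ℤ) : RatFunc ℚ :=
  qbinE (N + r) r

lemma qEsymm_of_neg (N : ℤ) {r : ℤ} (hr : r < 0) : qEsymm N r = 0 := by
  rw [qEsymm, qbinE_of_neg N hr, mul_zero]

lemma qHsymm_of_neg (N : ℤ) {r : ℤ} (hr : r < 0) : qHsymm N r = 0 :=
  qbinE_of_neg _ hr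

lemma qEsymm_zero (N : ℤ) : qEsymm N 0 = 1 := by
  simp [qEsymm, triZ, qbinE_zero]

lemma qHsymm_zero (N : ℤ) : qHsymm N 0 = 1 :=
  qbinE_zero _

lemma qEsymm_eq_zero_of_lt {N r : ℤ} (hN : 0 ≤ N) (hr : N < r) : qEsymm N r = 0 := by
  rw [qEsymm, qbinE_eq_zero_of_lt hN hr, mul_zero]

lemma qHsymm_eq_zero_of_neg {N r : ℤ} (hN : N < 0) (hr : 0 ≤ N + r) : qHsymm N r = 0 :=
  qbinE_eq_zero_of_lt hr (by omega)

lemma qEsymm_pascal (N r : ℤ) :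
    qEsymm N r = qEsymm (N - 1) r + 𝐪 ^ N * qEsymm (N - 1) (r - 1) := by
  have hpow : 𝐪 ^ N = 𝐪 ^ (N - r) * 𝐪 ^ r := by
    rw [← X_zpow_add, sub_add_cancel]
  rw [qEsymm, qEsymm, qEsymm, qbinE_pascal N r, X_zpow_triZ r, hpow]
  ring

lemma qHsymm_pascal (N r : ℤ) :
    qHsymm N r = qHsymm (N - 1) r + 𝐪 ^ N * qHsymm N (r - 1) := by
  rw [qHsymm, qHsymm, qHsymm, qbinE_pascal (N + r) r, add_sub_cancel_right, sub_add_eq_add_sub,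
    add_sub_assoc]

end qBinomial

section FiniteSupport

lemma finsum_comp_sub_right {G A : Type*} [AddGroup G] [AddCommMonoid A] (f : G → A) (v : G) :
    ∑ᶠ x, f (x - v) = ∑ᶠ x, f x :=
  finsum_comp_equiv (Equiv.subRight v)

lemma finsum_natCast {A : Type*} [AddCommMonoid A] {f : ℤ → A} (hf : ∀ t < 0, f t = 0) :
    ∑ᶠ n : ℕ, f n = ∑ᶠ t, f t := by
  have hsupp : Function.support f ⊆ Set.range ((↑) : ℕ → ℤ) := fun t ht =>
    ⟨t.toNat, Int.toNat_of_nonneg (not_lt.mp fun h => ht (hf t h))⟩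
  rw [← finsum_mem_range Nat.cast_injective, ← finsum_mem_univ f]
  exact finsum_mem_inter_support_eq f _ _ (by rw [Set.univ_inter, Set.inter_eq_right.mpr hsupp])

lemma hasFiniteSupport_slice {σ τ A : Type*} [Zero A] {f : σ × τ → A} (hf : HasFiniteSupport f)
    (s : σ) : HasFiniteSupport fun t => f (s, t) :=
  hf.preimage (Prod.mk_right_injective s).injOn

lemma finsum_curry₆ {α β γ δ ε ζ A : Type*} [AddCommMonoid A] (f : α × β × γ × δ × ε × ζ → A)
    (hf : HasFiniteSupport f) :
    ∑ᶠ x, f x = ∑ᶠ (a) (b) (c) (d) (e) (z), f (a, b, c, d, e, z) := by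
  rw [finsum_curry₃ f hf]
  refine finsum_congr fun a => finsum_congr fun b => ?_
  have hb := hasFiniteSupport_slice (hasFiniteSupport_slice hf a) b
  rw [finsum_curry₃ _ hb]
  refine finsum_congr fun c => finsum_congr fun d => ?_
  exact finsum_curry _ (hasFiniteSupport_slice (hasFiniteSupport_slice hb c) d)

end FiniteSupport

section Recurrences

/-- The value of `F(L) - F(L - 1)` prescribed by the recurrence in `L`; it only involves parameters
with a smaller `i + j + k`. -/
noncomputable def stepL (F : ℤ → ℤ → ℤ → ℤ → ℤ → RatFunc ℚ) (i j k L M : ℤ) : RatFunc ℚ :=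
  𝐪 ^ L * (F (i - 1) (j - 1) k (L - 2) (M - 1) + F (i - 1) j k (L - 1) (M - 1) +
    F i (j - 1) k (L - 1) (M - 1)) - 𝐪 ^ (2 * L - 1) * F (i - 1) (j - 1) k (L - 2) (M - 2)

/-- The value of `F(M) - F(M - 1)` prescribed by the recurrence in `M`; it only involves parameters
with a smaller `i + j + k`. -/
noncomputable def stepM (F : ℤ → ℤ → ℤ → ℤ → ℤ → RatFunc ℚ) (i j k L M : ℤ) : RatFunc ℚ :=
  𝐪 ^ M * (F (i - 1) j (k - 1) (L - 1) (M - 2) + F i (j - 1) (k - 1) (L - 1) (M - 2) +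
    F i j (k - 1) (L - 1) (M - 1)) + 𝐪 ^ (2 * M - 1) * F (i - 1) (j - 1) (k - 2) (L - 2) (M - 3)

end Recurrences

section SixfoldSum

/-- The product of `[L-s+α; α] [L-s+β; β] [M-s+γ; γ] [L-s; δ] [M-s; ε] [M-s; φ]` and
`q ^ (T_δ + T_ε + T_φ)`, for `N = L - s` and `K = M - s`. -/
noncomputable def sixfoldProd (N K a b c d e f : ℤ) : RatFunc ℚ :=
  qHsymm N a * qHsymm N b * qHsymm K c * qEsymm N d * qEsymm K e * qEsymm K f

/-- The summand of the sixfold sum without its factor `q ^ T_s`. -/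
noncomputable def sixfoldWeight (N K a b c d e f : ℤ) : RatFunc ℚ :=
  sixfoldProd N K a b c d e f + sixfoldProd N K (a - 1) b c d e (f - 1)

/-- The summand `q ^ T_s w(L - s, M - s, α, β, γ, δ, ε, φ)` at `p = (δ, ε, φ)`; the linear
constraints determine `α, β, γ`, and `s = i + j + k - δ - ε - φ`. -/
noncomputable def weightedTerm (w : ℤ → ℤ → ℤ → ℤ → ℤ → ℤ → ℤ → ℤ → RatFunc ℚ) (i j k L M : ℤ)
    (p : ℤ × ℤ × ℤ) : RatFunc ℚ :=
  𝐪 ^ triZ (i + j + k - p.1 - p.2.1 - p.2.2) *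
    w (L - (i + j + k - p.1 - p.2.1 - p.2.2)) (M - (i + j + k - p.1 - p.2.1 - p.2.2))
      (i - p.1 - p.2.1) (j - p.1 - p.2.2) (k - p.2.1 - p.2.2) p.1 p.2.1 p.2.2

/-- The summand of the left-hand side at `p = (δ, ε, φ)`. -/
noncomputable def sixfoldTerm : ℤ → ℤ → ℤ → ℤ → ℤ → ℤ × ℤ × ℤ → RatFunc ℚ :=
  weightedTerm sixfoldWeight

/-- The left-hand side of the identity, as a sum over all integer triples `(δ, ε, φ)`. -/
noncomputable def sixfoldSum (i j k L M : ℤ) : RatFunc ℚ :=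
  ∑ᶠ p, sixfoldTerm i j k L M p

/-- The triples `(δ, ε, φ)` for which `α, β, γ, δ, ε, φ` are all non-negative. -/
def sixfoldIndex (i j k : ℤ) : Set (ℤ × ℤ × ℤ) :=
  {p | 0 ≤ p.1 ∧ 0 ≤ p.2.1 ∧ 0 ≤ p.2.2 ∧
    0 ≤ i - p.1 - p.2.1 ∧ 0 ≤ j - p.1 - p.2.2 ∧ 0 ≤ k - p.2.1 - p.2.2}

lemma sixfoldIndex_finite (i j k : ℤ) : (sixfoldIndex i j k).Finite := by
  refine (Set.finite_Icc (0, 0, 0) (i, i, j)).subset fun p hp => ?_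
  simp only [sixfoldIndex, Set.mem_ofPred_eq] at hp
  simp only [Set.mem_Icc, Prod.le_def]
  omega

lemma sixfoldProd_eq_zero {N K a b c d e f : ℤ}
    (h : a < 0 ∨ b < 0 ∨ c < 0 ∨ d < 0 ∨ e < 0 ∨ f < 0) : sixfoldProd N K a b c d e f = 0 := by
  rcases h with h | h | h | h | h | h <;> simp [sixfoldProd, qHsymm_of_neg _ h, qEsymm_of_neg _ h]

lemma sixfoldWeight_eq_zero {N K a b c d e f : ℤ}
    (h : a < 0 ∨ b < 0 ∨ c < 0 ∨ d < 0 ∨ e < 0 ∨ f < 0) : sixfoldWeight N K a b c d e f = 0 := by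
  rw [sixfoldWeight, sixfoldProd_eq_zero h, sixfoldProd_eq_zero (by omega), add_zero]

section

variable {w : ℤ → ℤ → ℤ → ℤ → ℤ → ℤ → ℤ → ℤ → RatFunc ℚ}

lemma support_weightedTerm_subset
    (hw : ∀ {N K a b c d e f : ℤ}, a < 0 ∨ b < 0 ∨ c < 0 ∨ d < 0 ∨ e < 0 ∨ f < 0 →
      w N K a b c d e f = 0) (i j k L M : ℤ) :
    Function.support (weightedTerm w i j k L M) ⊆ sixfoldIndex i j k := by
  intro p hp
  contrapose! hp
  rw [Function.notMem_support, weightedTerm, hw, mul_zero]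
  simp only [sixfoldIndex, Set.mem_ofPred_eq] at hp
  omega

lemma weightedTerm_eq {i j k L M N K a b c d e f : ℤ} (s : ℤ)
    (hs : s = i + j + k - d - e - f := by ring) (hL : L = N + s := by ring)
    (hM : M = K + s := by ring) (hi : i = a + d + e := by ring) (hj : j = b + d + f := by ring)
    (hk : k = c + e + f := by ring) :
    weightedTerm w i j k L M (d, e, f) = 𝐪 ^ triZ s * w N K a b c d e f := by
  rw [weightedTerm, ← hs, hL, hM, hi, hj, hk]
  ring_nf

end

lemma support_sixfoldTerm_subset (i j k L M : ℤ) :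
    Function.support (sixfoldTerm i j k L M) ⊆ sixfoldIndex i j k :=
  support_weightedTerm_subset sixfoldWeight_eq_zero i j k L M

@[fun_prop]
lemma hasFiniteSupport_sixfoldTerm (i j k L M : ℤ) : HasFiniteSupport (sixfoldTerm i j k L M) :=
  (sixfoldIndex_finite i j k).subset (support_sixfoldTerm_subset i j k L M)

lemma sixfoldWeight_recurrence_fst (N K a b c d e f : ℤ) :
    sixfoldWeight N K a b c d e f - sixfoldWeight (N - 1) K a b c d e f =
      𝐪 ^ N * (sixfoldWeight (N - 1) K a b c (d - 1) e f + sixfoldWeight N K (a - 1) b c d e f +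
        sixfoldWeight N K a (b - 1) c d e f) -
      𝐪 ^ N * 𝐪 ^ N * sixfoldWeight N K (a - 1) (b - 1) c d e f := by
  simp only [sixfoldWeight, sixfoldProd]
  rw [qHsymm_pascal N a, qHsymm_pascal N (a - 1), qHsymm_pascal N b, qEsymm_pascal N d]
  ring

lemma sixfoldWeight_recurrence_snd (N K a b c d e f : ℤ) :
    sixfoldWeight N K a b c d e f - sixfoldWeight N (K - 1) a b c d e f =
      𝐪 ^ K * (sixfoldWeight N (K - 1) a b c d (e - 1) f +
        sixfoldWeight N (K - 1) a b c d e (f - 1) + sixfoldWeight N K a b (c - 1) d e f) +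
      𝐪 ^ K * 𝐪 ^ K * sixfoldWeight N (K - 1) a b c d (e - 1) (f - 1) := by
  simp only [sixfoldWeight, sixfoldProd]
  rw [qHsymm_pascal K c, qEsymm_pascal K e, qEsymm_pascal K f, qEsymm_pascal K (f - 1)]
  ring

lemma X_zpow_mul_triZ_sub_one (N s : ℤ) :
    𝐪 ^ (N + s) * 𝐪 ^ triZ (s - 1) = 𝐪 ^ N * 𝐪 ^ triZ s := by
  rw [X_zpow_triZ s, X_zpow_add, mul_assoc]

lemma X_zpow_mul_triZ_sub_two (N s : ℤ) :
    𝐪 ^ (2 * (N + s) - 1) * 𝐪 ^ triZ (s - 2) = 𝐪 ^ N * 𝐪 ^ N * 𝐪 ^ triZ s := by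
  rw [X_zpow_triZ s, X_zpow_triZ (s - 1), sub_sub, one_add_one_eq_two,
    show 2 * (N + s) - 1 = N + N + s + (s - 1) by ring]
  simp only [X_zpow_add, mul_assoc]

lemma sixfoldTerm_recurrence_L (i j k L M : ℤ) (p : ℤ × ℤ × ℤ) :
    sixfoldTerm i j k L M p - sixfoldTerm i j k (L - 1) M p =
      𝐪 ^ L * (sixfoldTerm (i - 1) (j - 1) k (L - 2) (M - 1) (p - (1, 0, 0)) +
        sixfoldTerm (i - 1) j k (L - 1) (M - 1) p + sixfoldTerm i (j - 1) k (L - 1) (M - 1) p) -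
      𝐪 ^ (2 * L - 1) * sixfoldTerm (i - 1) (j - 1) k (L - 2) (M - 2) p := by
  obtain ⟨d, e, f⟩ := p
  obtain ⟨a, rfl⟩ : ∃ a, i = a + d + e := ⟨i - d - e, by ring⟩
  obtain ⟨b, rfl⟩ : ∃ b, j = b + d + f := ⟨j - d - f, by ring⟩
  obtain ⟨c, rfl⟩ : ∃ c, k = c + e + f := ⟨k - e - f, by ring⟩
  obtain ⟨s, hs⟩ : ∃ s, s = a + b + c + d + e + f := ⟨_, rfl⟩
  obtain ⟨N, rfl⟩ : ∃ N, L = N + s := ⟨L - s, by ring⟩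
  obtain ⟨K, rfl⟩ : ∃ K, M = K + s := ⟨M - s, by ring⟩
  simp only [Prod.mk_sub_mk, sub_zero]
  simp only [sixfoldTerm]
  rw [weightedTerm_eq (N := N) (K := K) (a := a) (b := b) (c := c) s (by lia),
    weightedTerm_eq (N := N - 1) (K := K) (a := a) (b := b) (c := c) s (by lia),
    weightedTerm_eq (N := N - 1) (K := K) (a := a) (b := b) (c := c) (s - 1) (by lia),
    weightedTerm_eq (N := N) (K := K) (a := a - 1) (b := b) (c := c) (s - 1) (by lia),
    weightedTerm_eq (N := N) (K := K) (a := a) (b := b - 1) (c := c) (s - 1) (by lia),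
    weightedTerm_eq (N := N) (K := K) (a := a - 1) (b := b - 1) (c := c) (s - 2) (by lia)]
  linear_combination 𝐪 ^ triZ s * sixfoldWeight_recurrence_fst N K a b c d e f -
    (sixfoldWeight (N - 1) K a b c (d - 1) e f + sixfoldWeight N K (a - 1) b c d e f +
      sixfoldWeight N K a (b - 1) c d e f) * X_zpow_mul_triZ_sub_one N s +
    sixfoldWeight N K (a - 1) (b - 1) c d e f * X_zpow_mul_triZ_sub_two N s

lemma sixfoldTerm_recurrence_M (i j k L M : ℤ) (p : ℤ × ℤ × ℤ) :
    sixfoldTerm i j k L M p - sixfoldTerm i j k L (M - 1) p =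
      𝐪 ^ M * (sixfoldTerm (i - 1) j (k - 1) (L - 1) (M - 2) (p - (0, 1, 0)) +
        sixfoldTerm i (j - 1) (k - 1) (L - 1) (M - 2) (p - (0, 0, 1)) +
        sixfoldTerm i j (k - 1) (L - 1) (M - 1) p) +
      𝐪 ^ (2 * M - 1) *
        sixfoldTerm (i - 1) (j - 1) (k - 2) (L - 2) (M - 3) (p - (0, 1, 1)) := by
  obtain ⟨d, e, f⟩ := p
  obtain ⟨a, rfl⟩ : ∃ a, i = a + d + e := ⟨i - d - e, by ring⟩
  obtain ⟨b, rfl⟩ : ∃ b, j = b + d + f := ⟨j - d - f, by ring⟩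
  obtain ⟨c, rfl⟩ : ∃ c, k = c + e + f := ⟨k - e - f, by ring⟩
  obtain ⟨s, hs⟩ : ∃ s, s = a + b + c + d + e + f := ⟨_, rfl⟩
  obtain ⟨N, rfl⟩ : ∃ N, L = N + s := ⟨L - s, by ring⟩
  obtain ⟨K, rfl⟩ : ∃ K, M = K + s := ⟨M - s, by ring⟩
  simp only [Prod.mk_sub_mk, sub_zero]
  simp only [sixfoldTerm]
  rw [weightedTerm_eq (N := N) (K := K) (a := a) (b := b) (c := c) s (by lia),
    weightedTerm_eq (N := N) (K := K - 1) (a := a) (b := b) (c := c) s (by lia),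
    weightedTerm_eq (N := N) (K := K - 1) (a := a) (b := b) (c := c) (s - 1) (by lia),
    weightedTerm_eq (N := N) (K := K - 1) (a := a) (b := b) (c := c) (s - 1) (by lia),
    weightedTerm_eq (N := N) (K := K) (a := a) (b := b) (c := c - 1) (s - 1) (by lia),
    weightedTerm_eq (N := N) (K := K - 1) (a := a) (b := b) (c := c) (s - 2) (by lia)]
  linear_combination 𝐪 ^ triZ s * sixfoldWeight_recurrence_snd N K a b c d e f -
    (sixfoldWeight N (K - 1) a b c d (e - 1) f + sixfoldWeight N (K - 1) a b c d e (f - 1) +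
      sixfoldWeight N K a b (c - 1) d e f) * X_zpow_mul_triZ_sub_one K s -
    sixfoldWeight N (K - 1) a b c d (e - 1) (f - 1) * X_zpow_mul_triZ_sub_two K s

lemma sixfoldSum_recurrence_L (i j k L M : ℤ) :
    sixfoldSum i j k L M - sixfoldSum i j k (L - 1) M = stepL sixfoldSum i j k L M := by
  simp only [stepL, sixfoldSum]
  rw [← finsum_sub_distrib (by fun_prop) (by fun_prop),
    finsum_congr (sixfoldTerm_recurrence_L i j k L M)]
  simp (disch := fun_prop (disch := exact sub_left_injective)) only
    [finsum_sub_distrib, finsum_add_distrib, ← mul_finsum, finsum_comp_sub_right]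

lemma sixfoldSum_recurrence_M (i j k L M : ℤ) :
    sixfoldSum i j k L M - sixfoldSum i j k L (M - 1) = stepM sixfoldSum i j k L M := by
  simp only [stepM, sixfoldSum]
  rw [← finsum_sub_distrib (by fun_prop) (by fun_prop),
    finsum_congr (sixfoldTerm_recurrence_M i j k L M)]
  simp (disch := fun_prop (disch := exact sub_left_injective)) only
    [finsum_add_distrib, ← mul_finsum, finsum_comp_sub_right]

lemma sixfoldSum_eq_zero_of_neg {i j k : ℤ} (h : i < 0 ∨ j < 0 ∨ k < 0) (L M : ℤ) :
    sixfoldSum i j k L M = 0 := by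
  refine finsum_eq_zero_of_forall_eq_zero fun p => ?_
  rw [sixfoldTerm, weightedTerm, sixfoldWeight_eq_zero (by omega), mul_zero]

lemma sixfoldSum_zero_zero (k L M : ℤ) : sixfoldSum 0 0 k L M = qEsymm M k := by
  rw [sixfoldSum, finsum_eq_single _ (0, 0, 0) fun p hp => ?_]
  · have hpos : sixfoldProd (L - k) (M - k) 0 0 k 0 0 0 = qHsymm (M - k) k := by
      simp [sixfoldProd, qEsymm_zero, qHsymm_zero]
    rw [sixfoldTerm, weightedTerm_eq (N := L - k) (K := M - k) (a := 0) (b := 0) (c := k) k,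
      sixfoldWeight, hpos, sixfoldProd_eq_zero (by simp), add_zero, qHsymm, sub_add_cancel, qEsymm]
  · rw [sixfoldTerm, weightedTerm, sixfoldWeight_eq_zero, mul_zero]
    contrapose! hp
    simp only [Prod.ext_iff]
    omega

/-- The weight obtained from `sixfoldWeight` by moving the second product from `(δ, ε, φ)` to
`(δ + 1, ε, φ - 1)`, which preserves `s`. -/
noncomputable def shiftedWeight (N K a b c d e f : ℤ) : RatFunc ℚ :=
  sixfoldProd N K a b c d e f + sixfoldProd N K a b (c - 1) (d - 1) e f

lemma sixfoldSum_eq_finsum_shiftedWeight (i j k L M : ℤ) :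
    sixfoldSum i j k L M = ∑ᶠ p, weightedTerm shiftedWeight i j k L M p := by
  let u : ℤ → ℤ → ℤ → ℤ → ℤ → ℤ → ℤ → ℤ → RatFunc ℚ := fun N K a b c d e f =>
    sixfoldProd N K (a - 1) b c d e (f - 1)
  have hprod : HasFiniteSupport (weightedTerm sixfoldProd i j k L M) :=
    (sixfoldIndex_finite i j k).subset (support_weightedTerm_subset sixfoldProd_eq_zero i j k L M)
  have hu : HasFiniteSupport (weightedTerm u i j k L M) :=
    (sixfoldIndex_finite i j k).subset
      (support_weightedTerm_subset (fun h => sixfoldProd_eq_zero (by omega)) i j k L M)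
  have hsplit p : sixfoldTerm i j k L M p =
      weightedTerm sixfoldProd i j k L M p + weightedTerm u i j k L M p :=
    mul_add _ _ _
  have hshift p : weightedTerm shiftedWeight i j k L M p =
      weightedTerm sixfoldProd i j k L M p + weightedTerm u i j k L M (p - (1, 0, -1)) := by
    simp only [weightedTerm, shiftedWeight, u, Prod.fst_sub, Prod.snd_sub]
    ring_nf
  rw [sixfoldSum, finsum_congr hsplit, finsum_congr hshift, finsum_add_distrib hprod hu,
    finsum_add_distrib hprod (hu.fun_comp_of_injective sub_left_injective), finsum_comp_sub_right]

lemma qHsymm_mul_qEsymm_add_eq_zero {c d : ℤ} (hc : 0 ≤ c) (hd : 0 ≤ d) (hcd : 0 < c + d) :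
    qHsymm (d - c) c * qEsymm (d - c - 1) d +
      qHsymm (d - c) (c - 1) * qEsymm (d - c - 1) (d - 1) = 0 := by
  rcases lt_trichotomy c d with hlt | rfl | hlt
  · have hsnd : qHsymm (d - c) (c - 1) * qEsymm (d - c - 1) (d - 1) = 0 := by
      rcases hc.eq_or_lt with rfl | hc
      · rw [qHsymm_of_neg _ (by omega), zero_mul]
      · rw [qEsymm_eq_zero_of_lt (by omega) (by omega), mul_zero]
    rw [qEsymm_eq_zero_of_lt (by omega) (by omega), mul_zero, hsnd, add_zero]
  · have hH : qHsymm 0 c = qHsymm 0 (c - 1) := by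
      rw [qHsymm_pascal, qHsymm_eq_zero_of_neg (by omega) (by omega), zpow_zero, one_mul, zero_add]
    have hE : qEsymm (-1) c + qEsymm (-1) (c - 1) = 0 := by
      rw [← qEsymm_eq_zero_of_lt le_rfl (show 0 < c by omega), qEsymm_pascal 0 c, zpow_zero,
        one_mul, zero_sub]
    rw [sub_self, zero_sub, hH, ← mul_add, hE, mul_zero]
  · have hsnd : qHsymm (d - c) (c - 1) * qEsymm (d - c - 1) (d - 1) = 0 := by
      rcases hd.eq_or_lt with rfl | hd
      · rw [qEsymm_of_neg _ (by omega), mul_zero]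
      · rw [qHsymm_eq_zero_of_neg (by omega) (by omega), zero_mul]
    rw [qHsymm_eq_zero_of_neg (by omega) (by omega), zero_mul, hsnd, add_zero]

lemma shiftedWeight_base {a b c d e f : ℤ} (h : 0 < a + b + 2 * d + e + f) :
    shiftedWeight (d - c - 1) (d - c) a b c d e f = 0 := by
  by_cases! hneg : a < 0 ∨ b < 0 ∨ c < 0 ∨ d < 0 ∨ e < 0 ∨ f < 0
  · rw [shiftedWeight, sixfoldProd_eq_zero hneg, sixfoldProd_eq_zero (by omega), add_zero]
  obtain ⟨_, _, hc, hd, _, _⟩ := hneg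
  obtain hcd | ⟨rfl, rfl⟩ : 0 < c + d ∨ c = 0 ∧ d = 0 := by omega
  · have hbracket := qHsymm_mul_qEsymm_add_eq_zero hc hd hcd
    simp only [shiftedWeight, sixfoldProd]
    linear_combination qHsymm (d - c - 1) a * qHsymm (d - c - 1) b * qEsymm (d - c) e *
      qEsymm (d - c) f * hbracket
  · rw [shiftedWeight, sixfoldProd_eq_zero (c := 0 - 1) (by omega), add_zero, sixfoldProd]
    obtain ha | hb | he | hf : 0 < a ∨ 0 < b ∨ 0 < e ∨ 0 < f := by omega
    · simp [qHsymm_eq_zero_of_neg (show (-1 : ℤ) < 0 by simp) (show 0 ≤ -1 + a by omega)]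
    · simp [qHsymm_eq_zero_of_neg (show (-1 : ℤ) < 0 by simp) (show 0 ≤ -1 + b by omega)]
    · simp [qEsymm_eq_zero_of_lt le_rfl he]
    · simp [qEsymm_eq_zero_of_lt le_rfl hf]

lemma sixfoldSum_base {i j : ℤ} (hij : 0 < i + j) (k : ℤ) :
    sixfoldSum i j k (i + j - 1) (i + j) = 0 := by
  rw [sixfoldSum_eq_finsum_shiftedWeight]
  refine finsum_eq_zero_of_forall_eq_zero fun ⟨d, e, f⟩ => ?_
  rw [weightedTerm_eq (N := d - (k - e - f) - 1) (K := d - (k - e - f)) (a := i - d - e)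
    (b := j - d - f) (c := k - e - f) (i + j + k - d - e - f), shiftedWeight_base (by omega),
    mul_zero]

end SixfoldSum

section TauSum

/-- The weighted `q`-multinomial coefficient
`q ^ (T_a + T_b - T_t) (q^{u+1}; q)_n / ((q)_a (q)_b (q)_t)`. The length `n` is kept independent of
`a + b + t` so that each parameter can be shifted separately. -/
noncomputable def qMultinom (u n a b t : ℤ) : RatFunc ℚ :=
  𝐪 ^ (triZ a + triZ b - triZ t) * qPochhammer (𝐪 ^ (u + 1)) 𝐪 n.toNat *
    (qPochInv a * qPochInv b * qPochInv t)

/-- The coefficient of `q ^ (τ (M + 2))` times `qEsymm (M - i - j) (k - τ)` in the `τ`-sum. -/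
noncomputable def tauCoeff (i j L t : ℤ) : RatFunc ℚ :=
  qMultinom (L - i - j) (i + j - t) (i - t) (j - t) t

/-- The common factor of `tauCoeff i j L t` and of all its neighbours in the recurrences. -/
noncomputable def tauCore (i j L t : ℤ) : RatFunc ℚ :=
  qMultinom (L - i - j) (i + j - t - 1) (i - t) (j - t) t

/-- The summand of the right-hand side at `τ = t`. -/
noncomputable def tauTerm (i j k L M t : ℤ) : RatFunc ℚ :=
  𝐪 ^ (t * (M + 2)) * tauCoeff i j L t * qEsymm (M - i - j) (k - t)

/-- The right-hand side of the identity, as a sum over all integers `τ`. -/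
noncomputable def tauSum (i j k L M : ℤ) : RatFunc ℚ :=
  ∑ᶠ t, tauTerm i j k L M t

lemma qMultinom_eq_zero {u n a b t : ℤ} (h : a < 0 ∨ b < 0 ∨ t < 0) : qMultinom u n a b t = 0 := by
  rcases h with h | h | h <;> simp [qMultinom, qPochInv_of_neg h]

lemma qMultinom_comm (u n a b t : ℤ) : qMultinom u n a b t = qMultinom u n b a t := by
  rw [qMultinom, qMultinom, add_comm (triZ a), mul_comm (qPochInv a)]

lemma qMultinom_sub_one_fst (u n a b t : ℤ) :
    qMultinom u n (a - 1) b t = (𝐪 ^ (-a) - 1) * qMultinom u n a b t := by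
  have hpow : 𝐪 ^ (triZ (a - 1) + triZ b - triZ t) =
      𝐪 ^ (-a) * 𝐪 ^ (triZ a + triZ b - triZ t) := by
    rw [← X_zpow_add, triZ_sub_one]
    ring_nf
  have hcancel : 𝐪 ^ (-a) * 𝐪 ^ a = 1 := by
    rw [← X_zpow_add, neg_add_cancel, zpow_zero]
  rw [qMultinom, qMultinom, hpow, qPochInv_sub_one]
  linear_combination -(𝐪 ^ (triZ a + triZ b - triZ t) * qPochhammer (𝐪 ^ (u + 1)) 𝐪 n.toNat *
    (qPochInv a * qPochInv b * qPochInv t)) * hcancel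

lemma qMultinom_sub_one_snd (u n a b t : ℤ) :
    qMultinom u n a (b - 1) t = (𝐪 ^ (-b) - 1) * qMultinom u n a b t := by
  rw [qMultinom_comm, qMultinom_sub_one_fst, qMultinom_comm]

lemma qMultinom_sub_one_thd (u n a b t : ℤ) :
    qMultinom u n a b (t - 1) = 𝐪 ^ t * (1 - 𝐪 ^ t) * qMultinom u n a b t := by
  have hpow : 𝐪 ^ (triZ a + triZ b - triZ (t - 1)) = 𝐪 ^ t * 𝐪 ^ (triZ a + triZ b - triZ t) := by
    rw [← X_zpow_add, triZ_sub_one]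
    ring_nf
  rw [qMultinom, qMultinom, hpow, qPochInv_sub_one]
  ring

lemma qMultinom_eq_last_mul {u n a b t : ℤ} (hn : 0 ≤ a → 0 ≤ b → 0 ≤ t → 0 < n) :
    qMultinom u n a b t = (1 - 𝐪 ^ (u + n)) * qMultinom u (n - 1) a b t := by
  by_cases! h : a < 0 ∨ b < 0 ∨ t < 0
  · rw [qMultinom_eq_zero h, qMultinom_eq_zero h, mul_zero]
  · obtain ⟨m, rfl⟩ : ∃ m : ℕ, n = m + 1 := ⟨(n - 1).toNat, by grind⟩
    have hlast : 𝐪 ^ (u + 1) * 𝐪 ^ m = 𝐪 ^ (u + (m + 1)) := by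
      rw [← zpow_natCast, ← X_zpow_add, add_assoc, add_comm 1 (m : ℤ)]
    rw [qMultinom, qMultinom, Int.toNat_natCast_add_one, qPochhammer_succ, hlast,
      add_sub_cancel_right, Int.toNat_natCast]
    ring

lemma qMultinom_eq_first_mul {u n a b t : ℤ} (hn : 0 ≤ a → 0 ≤ b → 0 ≤ t → 0 < n) :
    qMultinom (u - 1) n a b t = (1 - 𝐪 ^ u) * qMultinom u (n - 1) a b t := by
  by_cases! h : a < 0 ∨ b < 0 ∨ t < 0
  · rw [qMultinom_eq_zero h, qMultinom_eq_zero h, mul_zero]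
  · obtain ⟨m, rfl⟩ : ∃ m : ℕ, n = m + 1 := ⟨(n - 1).toNat, by grind⟩
    rw [qMultinom, qMultinom, Int.toNat_natCast_add_one, qPochhammer_succ', sub_add_cancel,
      ← zpow_add_one₀ RatFunc.X_ne_zero, add_sub_cancel_right, Int.toNat_natCast]
    ring

lemma qMultinom_neg_one_eq_zero {n : ℤ} (hn : 0 < n) (a b t : ℤ) : qMultinom (-1) n a b t = 0 := by
  obtain ⟨m, rfl⟩ : ∃ m : ℕ, n = m + 1 := ⟨(n - 1).toNat, by omega⟩
  simp [qMultinom, qPochhammer_succ']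

lemma tauCoeff_eq (i j L t : ℤ) :
    tauCoeff i j L t = 𝐪 ^ (triZ (i - t) + triZ (j - t) - triZ t) *
      (qbinE (L - t) t * qbinE (L - 2 * t) (i - t) * qbinE (L - i - t) (j - t)) := by
  by_cases! h : i - t < 0 ∨ j - t < 0 ∨ t < 0
  · rw [tauCoeff, qMultinom_eq_zero h]
    rcases h with h | h | h <;> simp [qbinE_of_neg _ h]
  · obtain ⟨hi, hj, ht⟩ := h
    have hlen : (i + j - t).toNat = (j - t).toNat + ((i - t).toNat + t.toNat) := by omega
    have hsecond : 𝐪 ^ (L - i - j + 1) * 𝐪 ^ (j - t).toNat = 𝐪 ^ (L - 2 * t - (i - t) + 1) := by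
      rw [← zpow_natCast, ← X_zpow_add, Int.toNat_of_nonneg hj]
      ring_nf
    have hthird : 𝐪 ^ (L - 2 * t - (i - t) + 1) * 𝐪 ^ (i - t).toNat = 𝐪 ^ (L - t - t + 1) := by
      rw [← zpow_natCast, ← X_zpow_add, Int.toNat_of_nonneg hi]
      ring_nf
    simp only [qbinE_eq_qPochhammer_mul]
    rw [tauCoeff, qMultinom, hlen, qPochhammer_add, qPochhammer_add, hsecond, hthird,
      show L - i - t - (j - t) + 1 = L - i - j + 1 by ring]
    ring

lemma tauCoeff_eq_zero {i j t : ℤ} (L : ℤ) (h : t < 0 ∨ i < t ∨ j < t) : tauCoeff i j L t = 0 :=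
  qMultinom_eq_zero (by omega)

lemma tauCoeff_eq_mul_tauCore {i j : ℤ} (hij : 0 < i + j) (L t : ℤ) :
    tauCoeff i j L t = (1 - 𝐪 ^ (L - t)) * tauCore i j L t := by
  rw [tauCoeff, qMultinom_eq_last_mul (by omega), tauCore]
  ring_nf

lemma tauCoeff_sub_one_L_eq_mul_tauCore {i j : ℤ} (hij : 0 < i + j) (L t : ℤ) :
    tauCoeff i j (L - 1) t = (1 - 𝐪 ^ (L - i - j)) * tauCore i j L t := by
  rw [tauCoeff, show L - 1 - i - j = L - i - j - 1 by ring, qMultinom_eq_first_mul (by omega),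
    tauCore]

lemma tauCoeff_sub_one_i_eq_mul_tauCore (i j L t : ℤ) :
    tauCoeff (i - 1) j (L - 1) t = (𝐪 ^ (t - i) - 1) * tauCore i j L t := by
  rw [← neg_sub i t, tauCore, ← qMultinom_sub_one_fst, tauCoeff]
  ring_nf

lemma tauCoeff_sub_one_j_eq_mul_tauCore (i j L t : ℤ) :
    tauCoeff i (j - 1) (L - 1) t = (𝐪 ^ (t - j) - 1) * tauCore i j L t := by
  rw [← neg_sub j t, tauCore, ← qMultinom_sub_one_snd, tauCoeff]
  ring_nf

lemma tauCoeff_sub_one_ijt_eq_mul_tauCore (i j L t : ℤ) :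
    tauCoeff (i - 1) (j - 1) (L - 2) (t - 1) = 𝐪 ^ t * (1 - 𝐪 ^ t) * tauCore i j L t := by
  rw [tauCore, ← qMultinom_sub_one_thd, tauCoeff]
  ring_nf

lemma mul_tauCoeff_add_one_t_eq_mul_tauCore (i j L t : ℤ) :
    𝐪 ^ (t + 1) * (1 - 𝐪 ^ (t + 1)) * tauCoeff i j L (t + 1) =
      (𝐪 ^ (t - i) - 1) * ((𝐪 ^ (t - j) - 1) * tauCore i j L t) := by
  rw [tauCoeff, ← qMultinom_sub_one_thd, ← neg_sub i t, ← neg_sub j t, tauCore,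
    ← qMultinom_sub_one_snd, ← qMultinom_sub_one_fst]
  ring_nf

lemma mul_tauCoeff_sub_one_ij_eq_mul_tauCore (i j L t : ℤ) :
    (1 - 𝐪 ^ (L - 1 - t)) * tauCoeff (i - 1) (j - 1) (L - 2) t =
      (𝐪 ^ (t - i) - 1) * ((𝐪 ^ (t - j) - 1) * tauCore i j L t) := by
  rw [← neg_sub i t, ← neg_sub j t, tauCore, ← qMultinom_sub_one_snd, ← qMultinom_sub_one_fst,
    qMultinom_eq_last_mul (by omega), tauCoeff]
  ring_nf

lemma tauCoeff_recurrence_L {i j : ℤ} (hij : 0 < i + j) (L t : ℤ) :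
    𝐪 ^ t * tauCoeff i j L t = 𝐪 ^ t * tauCoeff i j (L - 1) t +
      𝐪 ^ L * (tauCoeff (i - 1) (j - 1) (L - 2) t + tauCoeff (i - 1) j (L - 1) t +
        tauCoeff i (j - 1) (L - 1) t) +
      𝐪 ^ (L - i - j) * tauCoeff (i - 1) (j - 1) (L - 2) (t - 1) -
      𝐪 ^ (2 * L - 1 - t) * tauCoeff (i - 1) (j - 1) (L - 2) t := by
  have hcore := mul_tauCoeff_sub_one_ij_eq_mul_tauCore i j L t
  rw [tauCoeff_eq_mul_tauCore hij, tauCoeff_sub_one_L_eq_mul_tauCore hij,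
    tauCoeff_sub_one_i_eq_mul_tauCore, tauCoeff_sub_one_j_eq_mul_tauCore,
    tauCoeff_sub_one_ijt_eq_mul_tauCore]
  simp only [two_mul, X_zpow_add, X_zpow_sub, zpow_one] at hcore ⊢
  linear_combination (norm := skip) -𝐪 ^ L * hcore
  have hX : 𝐪 ≠ 0 := RatFunc.X_ne_zero
  field_simp
  ring

lemma tauCoeff_recurrence_M {i j : ℤ} (hij : 0 < i + j) (L t : ℤ) :
    𝐪 ^ (2 * t - i - j) * tauCoeff i j L t =
      tauCoeff (i - 1) j (L - 1) t + tauCoeff i (j - 1) (L - 1) t + 𝐪 ^ t * tauCoeff i j (L - 1) t +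
      𝐪 ^ (-t) * tauCoeff (i - 1) (j - 1) (L - 2) (t - 1) +
      𝐪 ^ (t + 1) * (1 - 𝐪 ^ (t + 1)) * tauCoeff i j L (t + 1) := by
  rw [mul_tauCoeff_add_one_t_eq_mul_tauCore, tauCoeff_eq_mul_tauCore hij,
    tauCoeff_sub_one_L_eq_mul_tauCore hij, tauCoeff_sub_one_i_eq_mul_tauCore,
    tauCoeff_sub_one_j_eq_mul_tauCore, tauCoeff_sub_one_ijt_eq_mul_tauCore]
  simp only [two_mul, X_zpow_add, X_zpow_sub, zpow_neg]
  have hX : 𝐪 ≠ 0 := RatFunc.X_ne_zero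
  field_simp
  ring

lemma support_tauTerm_subset (i j k L M : ℤ) :
    Function.support (tauTerm i j k L M) ⊆ Set.Icc 0 i ∩ Set.Iic j := by
  intro t ht
  contrapose! ht
  rw [Function.notMem_support, tauTerm, tauCoeff_eq_zero L, mul_zero, zero_mul]
  simp only [Set.mem_inter_iff, Set.mem_Icc, Set.mem_Iic] at ht
  omega

@[fun_prop]
lemma hasFiniteSupport_tauTerm (i j k L M : ℤ) : HasFiniteSupport (tauTerm i j k L M) :=
  ((Set.finite_Icc 0 i).inter_of_left _).subset (support_tauTerm_subset i j k L M)

/-- The telescoping certificate for the recurrence in `L` of the `τ`-sum. -/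
noncomputable def tauCertL (i j k L M t : ℤ) : RatFunc ℚ :=
  𝐪 ^ (L + M - i - j + 1 + t) * tauTerm (i - 1) (j - 1) (k - 1) (L - 2) (M - 2) t

/-- The telescoping certificate for the recurrence in `M` of the `τ`-sum. -/
noncomputable def tauCertM (i j k L M t : ℤ) : RatFunc ℚ :=
  (𝐪 ^ (t + 1) - 1) * tauTerm i j k L (M - 1) (t + 1)

lemma tauTerm_recurrence_L {i j : ℤ} (hij : 0 < i + j) (k L M t : ℤ) :
    tauTerm i j k L M t - tauTerm i j k (L - 1) M t =
      𝐪 ^ L * (tauTerm (i - 1) (j - 1) k (L - 2) (M - 1) t +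
        tauTerm (i - 1) j k (L - 1) (M - 1) t + tauTerm i (j - 1) k (L - 1) (M - 1) t) -
      𝐪 ^ (2 * L - 1) * tauTerm (i - 1) (j - 1) k (L - 2) (M - 2) t +
      (tauCertL i j k L M (t - 1) - tauCertL i j k L M t) := by
  have hcoeff := tauCoeff_recurrence_L hij L t
  have hpascal := qEsymm_pascal (M + 1 - i - j) (k - t)
  simp only [tauCertL, tauTerm]
  rw [show M - 1 - (i - 1) - (j - 1) = M + 1 - i - j by ring, hpascal,
    show M + 1 - i - j - 1 = M - i - j by ring, show M - 1 - (i - 1) - j = M - i - j by ring,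
    show M - 1 - i - (j - 1) = M - i - j by ring,
    show M - 2 - (i - 1) - (j - 1) = M - i - j by ring,
    show k - 1 - (t - 1) = k - t by ring, show k - 1 - t = k - t - 1 by ring]
  simp only [two_mul, mul_two, sub_mul, mul_add, mul_sub, one_mul, mul_one, sub_add_cancel,
    X_zpow_add, X_zpow_sub, zpow_one] at hcoeff ⊢
  have hX : 𝐪 ≠ 0 := RatFunc.X_ne_zero
  linear_combination (norm := skip) 𝐪 ^ (t * M) * 𝐪 ^ t * qEsymm (M - i - j) (k - t) * hcoeff
  field_simp
  ring

lemma tauTerm_recurrence_M {i j : ℤ} (hij : 0 < i + j) (k L M t : ℤ) :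
    tauTerm i j k L M t - tauTerm i j k L (M - 1) t =
      𝐪 ^ M * (tauTerm (i - 1) j (k - 1) (L - 1) (M - 2) t +
        tauTerm i (j - 1) (k - 1) (L - 1) (M - 2) t + tauTerm i j (k - 1) (L - 1) (M - 1) t) +
      𝐪 ^ (2 * M - 1) * tauTerm (i - 1) (j - 1) (k - 2) (L - 2) (M - 3) (t - 1) +
      (tauCertM i j k L M (t - 1) - tauCertM i j k L M t) := by
  have hcoeff := tauCoeff_recurrence_M hij L t
  have hpascal := qEsymm_pascal (M - i - j) (k - t)
  simp only [tauCertM, tauTerm]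
  rw [hpascal, show M - 1 - i - j = M - i - j - 1 by ring,
    show M - 2 - (i - 1) - j = M - i - j - 1 by ring,
    show M - 2 - i - (j - 1) = M - i - j - 1 by ring,
    show M - 3 - (i - 1) - (j - 1) = M - i - j - 1 by ring,
    show k - 2 - (t - 1) = k - t - 1 by ring, show k - 1 - t = k - t - 1 by ring,
    show k - (t + 1) = k - t - 1 by ring, show M - 3 + 2 = M - 1 by ring, sub_add_cancel t 1]
  simp only [two_mul, mul_two, add_mul, sub_mul, mul_add, mul_sub, one_mul, mul_one,
    X_zpow_add, X_zpow_sub, zpow_neg, zpow_one] at hcoeff ⊢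
  have hX : 𝐪 ≠ 0 := RatFunc.X_ne_zero
  linear_combination (norm := skip)
    𝐪 ^ (t * M) * 𝐪 ^ M * qEsymm (M - i - j - 1) (k - t - 1) * hcoeff
  field_simp
  ring

@[fun_prop]
lemma hasFiniteSupport_tauCertL (i j k L M : ℤ) : HasFiniteSupport (tauCertL i j k L M) := by
  unfold tauCertL
  fun_prop

@[fun_prop]
lemma hasFiniteSupport_tauCertM (i j k L M : ℤ) : HasFiniteSupport (tauCertM i j k L M) := by
  unfold tauCertM
  fun_prop (disch := exact add_left_injective 1)

lemma tauSum_recurrence_L {i j : ℤ} (hij : 0 < i + j) (k L M : ℤ) :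
    tauSum i j k L M - tauSum i j k (L - 1) M = stepL tauSum i j k L M := by
  simp only [stepL, tauSum]
  rw [← finsum_sub_distrib (by fun_prop) (by fun_prop),
    finsum_congr (tauTerm_recurrence_L hij k L M)]
  simp (disch := fun_prop (disch := exact sub_left_injective)) only
    [finsum_sub_distrib, finsum_add_distrib, ← mul_finsum, finsum_comp_sub_right, sub_self,
      add_zero]

lemma tauSum_recurrence_M {i j : ℤ} (hij : 0 < i + j) (k L M : ℤ) :
    tauSum i j k L M - tauSum i j k L (M - 1) = stepM tauSum i j k L M := by
  simp only [stepM, tauSum]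
  rw [← finsum_sub_distrib (by fun_prop) (by fun_prop),
    finsum_congr (tauTerm_recurrence_M hij k L M)]
  simp (disch := fun_prop (disch := exact sub_left_injective)) only
    [finsum_sub_distrib, finsum_add_distrib, ← mul_finsum, finsum_comp_sub_right, sub_self,
      add_zero]

lemma tauSum_eq_zero_of_neg {i j k : ℤ} (h : i < 0 ∨ j < 0 ∨ k < 0) (L M : ℤ) :
    tauSum i j k L M = 0 := by
  refine finsum_eq_zero_of_forall_eq_zero fun t => ?_
  rw [tauTerm, mul_assoc]
  obtain ht | ht : (t < 0 ∨ i < t ∨ j < t) ∨ k - t < 0 := by omega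
  · rw [tauCoeff_eq_zero L ht, zero_mul, mul_zero]
  · rw [qEsymm_of_neg _ ht, mul_zero, mul_zero]

lemma tauSum_base {i j : ℤ} (hij : 0 < i + j) (k M : ℤ) : tauSum i j k (i + j - 1) M = 0 := by
  refine finsum_eq_zero_of_forall_eq_zero fun t => ?_
  rw [tauTerm, mul_assoc]
  by_cases! ht : t < 0 ∨ i < t ∨ j < t
  · rw [tauCoeff_eq_zero _ ht, zero_mul, mul_zero]
  · rw [tauCoeff, show i + j - 1 - i - j = -1 by ring, qMultinom_neg_one_eq_zero (by omega),
      zero_mul, mul_zero]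

lemma tauSum_zero_zero (k L M : ℤ) : tauSum 0 0 k L M = qEsymm M k := by
  rw [tauSum, finsum_eq_single _ 0 fun t ht => ?_]
  · simp [tauTerm, tauCoeff, qMultinom, qPochInv_zero, qPochhammer_zero, triZ]
  · rw [tauTerm, tauCoeff_eq_zero L (by omega), mul_zero, zero_mul]

end TauSum

section Identity

lemma eq_of_forall_eq_sub_one {A : Type*} {g : ℤ → A} (hg : ∀ n, g n = g (n - 1)) (m n : ℤ) :
    g m = g n := by
  have hper : Function.Periodic g 1 := fun x => by rw [hg (x + 1), add_sub_cancel_right]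
  simpa using hper.int_mul (m - n) n

theorem sixfoldSum_eq_tauSum (i j k L M : ℤ) : sixfoldSum i j k L M = tauSum i j k L M := by
  by_cases! hneg : i < 0 ∨ j < 0 ∨ k < 0
  · rw [sixfoldSum_eq_zero_of_neg hneg, tauSum_eq_zero_of_neg hneg]
  obtain ⟨hi, hj, _⟩ := hneg
  obtain ⟨rfl, rfl⟩ | hij : i = 0 ∧ j = 0 ∨ 0 < i + j := by omega
  · rw [sixfoldSum_zero_zero, tauSum_zero_zero]
  have hstepL L M : stepL sixfoldSum i j k L M = stepL tauSum i j k L M := by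
    simp only [stepL, sixfoldSum_eq_tauSum (i - 1) (j - 1) k, sixfoldSum_eq_tauSum (i - 1) j k,
      sixfoldSum_eq_tauSum i (j - 1) k]
  have hstepM L M : stepM sixfoldSum i j k L M = stepM tauSum i j k L M := by
    simp only [stepM, sixfoldSum_eq_tauSum (i - 1) j (k - 1),
      sixfoldSum_eq_tauSum i (j - 1) (k - 1), sixfoldSum_eq_tauSum i j (k - 1),
      sixfoldSum_eq_tauSum (i - 1) (j - 1) (k - 2)]
  have hL L M : sixfoldSum i j k L M - tauSum i j k L M =
      sixfoldSum i j k (L - 1) M - tauSum i j k (L - 1) M := by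
    linear_combination sixfoldSum_recurrence_L i j k L M - tauSum_recurrence_L hij k L M +
      hstepL L M
  have hM L M : sixfoldSum i j k L M - tauSum i j k L M =
      sixfoldSum i j k L (M - 1) - tauSum i j k L (M - 1) := by
    linear_combination sixfoldSum_recurrence_M i j k L M - tauSum_recurrence_M hij k L M +
      hstepM L M
  rw [← sub_eq_zero]
  calc sixfoldSum i j k L M - tauSum i j k L M
      = sixfoldSum i j k (i + j - 1) M - tauSum i j k (i + j - 1) M :=
        eq_of_forall_eq_sub_one (hL · M) L (i + j - 1)
    _ = sixfoldSum i j k (i + j - 1) (i + j) - tauSum i j k (i + j - 1) (i + j) :=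
        eq_of_forall_eq_sub_one (hM (i + j - 1)) M (i + j)
    _ = 0 := by rw [sixfoldSum_base hij, tauSum_base hij, sub_self]
termination_by (i + j + k).toNat

/-- The summation range of the sixfold sum: all `(α, β, γ, δ, ε, φ)` with `i = α + δ + ε`,
`j = β + δ + φ` and `k = γ + ε + φ`. -/
def sixfoldRange (i j k : ℤ) : Set (ℕ × ℕ × ℕ × ℕ × ℕ × ℕ) :=
  {(α, β, γ, δ, ε, φ) | (α : ℤ) + δ + ε = i ∧ (β : ℤ) + δ + φ = j ∧ (γ : ℤ) + ε + φ = k}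

lemma bijOn_sixfoldRange (i j k : ℤ) :
    Set.BijOn (fun (_, _, _, δ, ε, φ) => ((δ : ℤ), (ε : ℤ), (φ : ℤ))) (sixfoldRange i j k)
      (sixfoldIndex i j k) := by
  refine ⟨fun x hx => ?_, ?_, fun p hp => ?_⟩
  · simp only [sixfoldRange, Set.mem_ofPred_eq] at hx
    simp only [sixfoldIndex, Set.mem_ofPred_eq]
    omega
  · rintro ⟨α, β, γ, δ, ε, φ⟩ hx ⟨α', β', γ', δ', ε', φ'⟩ hy hxy
    simp only [sixfoldRange, Set.mem_ofPred_eq] at hx hy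
    simp only [Prod.mk.injEq] at hxy ⊢
    omega
  · simp only [sixfoldIndex, Set.mem_ofPred_eq] at hp
    refine ⟨((i - p.1 - p.2.1).toNat, (j - p.1 - p.2.2).toNat, (k - p.2.1 - p.2.2).toNat,
      p.1.toNat, p.2.1.toNat, p.2.2.toNat), ?_, ?_⟩
    · simp only [sixfoldRange, Set.mem_ofPred_eq]
      omega
    · simp only [Prod.ext_iff]
      omega

lemma finsum_sixfoldRange {A : Type*} [AddCommMonoid A] {i j k : ℤ} {g : ℤ × ℤ × ℤ → A}
    {F : ℕ → ℕ → ℕ → ℕ → ℕ → ℕ → A} (hg : Function.support g ⊆ sixfoldIndex i j k)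
    (hF : ∀ α β γ δ ε φ : ℕ, (α : ℤ) + δ + ε = i → (β : ℤ) + δ + φ = j → (γ : ℤ) + ε + φ = k →
      F α β γ δ ε φ = g (δ, ε, φ)) :
    (∑ᶠ (α : ℕ) (β : ℕ) (γ : ℕ) (δ : ℕ) (ε : ℕ) (φ : ℕ),
      if (α : ℤ) + δ + ε = i ∧ (β : ℤ) + δ + φ = j ∧ (γ : ℤ) + ε + φ = k then F α β γ δ ε φ
      else 0) = ∑ᶠ p, g p := by
  classical
  have hbij := bijOn_sixfoldRange i j k
  let f : ℕ × ℕ × ℕ × ℕ × ℕ × ℕ → A :=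
    (sixfoldRange i j k).indicator fun (α, β, γ, δ, ε, φ) => F α β γ δ ε φ
  have hf : HasFiniteSupport f :=
    (hbij.finite_iff_finite.mpr (sixfoldIndex_finite i j k)).subset Set.support_indicator_subset
  calc _ = ∑ᶠ (α) (β) (γ) (δ) (ε) (φ), f (α, β, γ, δ, ε, φ) := by
        simp only [f, Set.indicator_apply, sixfoldRange, Set.mem_ofPred_eq]
    _ = ∑ᶠ x ∈ sixfoldRange i j k, f x := by
        rw [← finsum_curry₆ f hf, finsum_mem_def, Set.indicator_indicator, Set.inter_self]
    _ = ∑ᶠ p ∈ sixfoldIndex i j k, g p := by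
        refine finsum_mem_eq_of_bijOn _ hbij fun x hx => ?_
        exact (Set.indicator_of_mem hx _).trans (hF _ _ _ _ _ _ hx.1 hx.2.1 hx.2.2)
    _ = ∑ᶠ p, g p := by
        rw [finsum_mem_def, Set.indicator_eq_self.mpr hg]

lemma sixfoldTerm_eq_qbinE {i j k : ℤ} (L M : ℤ) {a b c d e f s : ℤ} (hi : a + d + e = i)
    (hj : b + d + f = j) (hk : c + e + f = k) (hs : s = a + b + c + d + e + f) :
    sixfoldTerm i j k L M (d, e, f) = 𝐪 ^ (triZ s + triZ d + triZ e + triZ (f - 1)) *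
      (𝐪 ^ f * qbinE (L - s + a) a * qbinE (L - s + b) b * qbinE (M - s + c) c *
          qbinE (L - s) d * qbinE (M - s) e * qbinE (M - s) f +
        qbinE (L - s + a - 1) (a - 1) * qbinE (L - s + b) b * qbinE (M - s + c) c *
          qbinE (L - s) d * qbinE (M - s) e * qbinE (M - s) (f - 1)) := by
  rw [sixfoldTerm, weightedTerm_eq (N := L - s) (K := M - s) (a := a) (b := b) (c := c) s (by lia)
    (hi := hi.symm) (hj := hj.symm) (hk := hk.symm)]
  simp only [sixfoldWeight, sixfoldProd, qHsymm, qEsymm, X_zpow_add, X_zpow_triZ f, add_sub_assoc]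
  ring

lemma tauTerm_eq_qbinE (i j k L M t : ℤ) :
    tauTerm i j k L M t =
      𝐪 ^ (t * (M + 2) - triZ t + triZ (i - t) + triZ (j - t) + triZ (k - t)) *
        qbinE (L - t) t * qbinE (L - 2 * t) (i - t) * qbinE (L - i - t) (j - t) *
        qbinE (M - i - j) (k - t) := by
  rw [tauTerm, tauCoeff_eq, qEsymm]
  simp only [X_zpow_add, X_zpow_sub]
  ring

end Identity

/-- The double bounded key identity (6.3) for Göllnitz's (big) partition theorem, in the
field of rational functions `ℚ(q)`, for arbitrary integers `i, j, k, L, M`.  The left sum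
is over all non-negative `α, β, γ, δ, ε, φ` with `i = α + δ + ε`, `j = β + δ + φ`,
`k = γ + ε + φ`, where `s = α + β + γ + δ + ε + φ`. -/
theorem double_bounded_gollnitz_identity (i j k L M : ℤ) :
    (∑ᶠ (α : ℕ) (β : ℕ) (γ : ℕ) (δ : ℕ) (ε : ℕ) (φ : ℕ),
      if (α : ℤ) + δ + ε = i ∧ (β : ℤ) + δ + φ = j ∧ (γ : ℤ) + ε + φ = k then
        (fun s : ℤ =>
          (RatFunc.X : RatFunc ℚ) ^ (triZ s + triZ (δ : ℤ) + triZ (ε : ℤ) + triZ ((φ : ℤ) - 1)) *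
            ((RatFunc.X : RatFunc ℚ) ^ (φ : ℤ) *
                qbinE (L - s + α) (α : ℤ) * qbinE (L - s + β) (β : ℤ) *
                qbinE (M - s + γ) (γ : ℤ) * qbinE (L - s) (δ : ℤ) *
                qbinE (M - s) (ε : ℤ) * qbinE (M - s) (φ : ℤ) +
              qbinE (L - s + α - 1) ((α : ℤ) - 1) * qbinE (L - s + β) (β : ℤ) *
                qbinE (M - s + γ) (γ : ℤ) * qbinE (L - s) (δ : ℤ) *
                qbinE (M - s) (ε : ℤ) * qbinE (M - s) ((φ : ℤ) - 1)))
          ((α : ℤ) + β + γ + δ + ε + φ)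
      else 0) =
    ∑ᶠ (τ : ℕ),
      (RatFunc.X : RatFunc ℚ) ^
          ((τ : ℤ) * (M + 2) - triZ (τ : ℤ) + triZ (i - τ) + triZ (j - τ) + triZ (k - τ)) *
        qbinE (L - τ) (τ : ℤ) * qbinE (L - 2 * τ) (i - τ) *
        qbinE (L - i - τ) (j - τ) * qbinE (M - i - j) (k - τ) := by
  rw [finsum_sixfoldRange (support_sixfoldTerm_subset i j k L M)
    fun α β γ δ ε φ hi hj hk => (sixfoldTerm_eq_qbinE L M hi hj hk rfl).symm]
  calc ∑ᶠ p, sixfoldTerm i j k L M p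
      = ∑ᶠ t, tauTerm i j k L M t := sixfoldSum_eq_tauSum i j k L M
    _ = ∑ᶠ τ : ℕ, tauTerm i j k L M τ :=
        (finsum_natCast fun t ht => by rw [tauTerm, tauCoeff_eq_zero L (.inl ht)]; simp).symm
    _ = _ := finsum_congr fun τ => tauTerm_eq_qbinE i j k L M τ
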